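/- If S is a simple semilattice with one operator (i.e., ⟨S,+,0,f⟩ has exactly two congruences), then |S| = 2. -/

import Mathlib

variable {S : Type*} [SemilatticeSup S] [OrderBot S]

/-- An operator on a join semilattice with zero: a unary `(⊔,0)`-endomorphism. -/
def IsOperator (f : S → S) : Prop :=
  (∀ x y : S, f (x ⊔ y) = f x ⊔ f y) ∧ f ⊥ = ⊥

/-- A congruence of a join semilattice with zero and a set `F` of operators. -/
def IsCong (F : Set (S → S)) (θ : S → S → Prop) : Prop :=
  Equivalence θ ∧ (∀ x y z : S, θ x y → θ (x ⊔ z) (y ⊔ z)) ∧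
    ∀ f ∈ F, ∀ x y, θ x y → θ (f x) (f y)

/-- If `⟨S,+,0,f⟩` is a simple semilattice with one operator (its only
congruences are the identity and the full relation, and these differ), then
`S` has exactly two elements. -/
theorem simple_semilattice_with_operator_two_elements (f : S → S)
    (hf : IsOperator f)
    (hsimple : ∀ θ : S → S → Prop, IsCong {f} θ →
      θ = (fun x y => x = y) ∨ θ = (fun _ _ => True))
    (hnontriv : ∃ a b : S, a ≠ b) :
    ∃ a b : S, a ≠ b ∧ ∀ x : S, x = a ∨ x = b := by
  obtain ⟨hsup, hbot⟩ := hf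
  -- the kernel of `f` is trivial or full
  have hker : IsCong {f} (fun x y => f x = f y) := by
    refine ⟨⟨fun _ => rfl, fun h => h.symm, fun h k => h.trans k⟩, ?_, ?_⟩
    · intro x y z h
      simp only [hsup, h]
    · intro g hg x y h
      rw [Set.mem_singleton_iff] at hg
      subst hg
      exact congrArg g h
  -- in both cases being equal to bottom or not is a congruence
  have hmain : IsCong {f} (fun x y : S => (x = ⊥ ↔ y = ⊥)) := by
    refine ⟨⟨fun _ => Iff.rfl, fun h => h.symm, fun h k => h.trans k⟩, ?_, ?_⟩
    · intro x y z h
      simp only [sup_eq_bot_iff, h]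
    · intro g hg x y h
      rw [Set.mem_singleton_iff] at hg
      subst hg
      rcases hsimple _ hker with hk | hk
      · have key : ∀ x, g x = ⊥ ↔ x = ⊥ := fun x => by
          have := congrFun (congrFun hk x) ⊥
          simp only [hbot] at this
          exact this.to_iff
        simp only [key, h]
      · have key : ∀ x, g x = ⊥ := fun x => by
          have := congrFun (congrFun hk x) ⊥
          simp only [hbot] at this
          exact of_eq_true this
        simp only [key]
  have hc : ∃ c : S, c ≠ ⊥ := by
    obtain ⟨a, b, hab⟩ := hnontriv
    by_contra! h
    exact hab ((h a).trans (h b).symm)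
  obtain ⟨c, hc⟩ := hc
  refine ⟨⊥, c, hc.symm, fun x => ?_⟩
  rcases hsimple _ hmain with h | h
  · by_cases hx : x = ⊥
    · exact Or.inl hx
    · right
      have := (congrFun (congrFun h x) c).to_iff
      exact this.1 ⟨fun k => absurd k hx, fun k => absurd k hc⟩
  · have := of_eq_true (congrFun (congrFun h c) ⊥)
    exact absurd (this.2 rfl) hc
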